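/- A transcendental entire function f has Baker omitted value ∞ if and only if the image under f of every unbounded curve is unbounded. -/

import Mathlib

open Complex Metric Bornology Topology Filter Set OnePoint

/-- `z₀` is a pole of `f` : `f → ∞` near `z₀`. -/
def IsPole (f : ℂ → ℂ) (z₀ : ℂ) : Prop :=
  Tendsto f (𝓝[≠] z₀) (Bornology.cobounded ℂ)

/-- `f` is a transcendental meromorphic function on `ℂ`
(meromorphic everywhere and not a rational function). -/
def TranscMero (f : ℂ → ℂ) : Prop :=
  MeromorphicOn f Set.univ ∧
    ¬ ∃ p q : Polynomial ℂ, q ≠ 0 ∧ ∀ z, f z * q.eval z = p.eval z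

/-- `f` is a transcendental entire function. -/
def TranscEntire (f : ℂ → ℂ) : Prop :=
  Differentiable ℂ f ∧ ¬ ∃ p : Polynomial ℂ, f = fun z => p.eval z

/-- Preimage under the meromorphic function `f` of the ball `D_r(a)`
(poles, where the `ℂ`-valued representative carries a junk value, are excluded). -/
def preimBall (f : ℂ → ℂ) (a : ℂ) (r : ℝ) : Set ℂ :=
  {z | ¬ IsPole f z ∧ f z ∈ Metric.ball a r}

/-- Every connected component of `S` is a bounded subset of `ℂ`. -/
def BoundedComponents (S : Set ℂ) : Prop :=
  ∀ z ∈ S, Bornology.IsBounded (connectedComponentIn S z)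

/-- `S ⊆ ℂ` is infinitely connected: its complement has infinitely many
connected components. -/
def InfConnected (S : Set ℂ) : Prop :=
  {C : Set ℂ | ∃ z ∈ Sᶜ, C = connectedComponentIn Sᶜ z}.Infinite

/-- `a ∈ ℂ` is a Baker omitted value of the meromorphic function `f`:
`a` is omitted and, for all sufficiently small `r > 0`, every component of the
boundary of `f⁻¹(D_r(a))` is bounded. -/
def BakerOmittedValue (f : ℂ → ℂ) (a : ℂ) : Prop :=
  (∀ z, ¬ IsPole f z → f z ≠ a) ∧
    ∃ r₀ > 0, ∀ r, 0 < r → r < r₀ →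
      BoundedComponents (frontier (preimBall f a r))

/-- `∞` is a Baker omitted value of the entire function `f`: for every large
enough `R`, every component of the boundary of `f⁻¹({|w| > R})` is bounded. -/
def BakerOmittedValueInf (f : ℂ → ℂ) : Prop :=
  ∃ R₀ > 0, ∀ R, R₀ < R → BoundedComponents (frontier {z | R < ‖f z‖})

/-- Baker omitted value at a point of the Riemann sphere `ℂ ∪ {∞}`. -/
def BakerOmittedValueSph (f : ℂ → ℂ) (v : OnePoint ℂ) : Prop :=
  (v = ∞ ∧ (∀ z, ¬ IsPole f z) ∧ BakerOmittedValueInf f) ∨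
    (∃ a : ℂ, v = ↑a ∧ BakerOmittedValue f a)

/-- `b ∈ ℂ` is a (finite) asymptotic value of `f`. -/
def AsympValue (f : ℂ → ℂ) (b : ℂ) : Prop :=
  ∃ γ : ℝ → ℂ, ContinuousOn γ (Set.Ici 0) ∧
    Tendsto γ atTop (Bornology.cobounded ℂ) ∧
    Tendsto (fun t => f (γ t)) atTop (𝓝 b)

/-- `∞` is an asymptotic value of `f`. -/
def AsympValueInf (f : ℂ → ℂ) : Prop :=
  ∃ γ : ℝ → ℂ, ContinuousOn γ (Set.Ici 0) ∧
    Tendsto γ atTop (Bornology.cobounded ℂ) ∧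
    Tendsto (fun t => f (γ t)) atTop (Bornology.cobounded ℂ)

/-- uniform divergence to `∞` of a sequence of functions on `K`. -/
def UnifDiverges (F : ℕ → ℂ → ℂ) (K : Set ℂ) : Prop :=
  ∀ M : ℝ, ∀ᶠ n in atTop, ∀ z ∈ K, M < ‖F n z‖

/-- The iterates of `f` form a normal family on `U`: every subsequence has a
further subsequence converging locally uniformly on `U`, either to a finite
limit function or to `∞`. -/
def NormalOn (f : ℂ → ℂ) (U : Set ℂ) : Prop :=
  ∀ s : ℕ → ℕ, StrictMono s → ∃ t : ℕ → ℕ, StrictMono t ∧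
    ((∃ g : ℂ → ℂ, TendstoLocallyUniformlyOn (fun n => f^[s (t n)]) g atTop U) ∨
      (∀ K ⊆ U, IsCompact K → UnifDiverges (fun n => f^[s (t n)]) K))

/-- The Fatou set of `f`. -/
def FatouSet (f : ℂ → ℂ) : Set ℂ :=
  {z | ∃ U : Set ℂ, IsOpen U ∧ z ∈ U ∧ NormalOn f U}

/-- `U` is a Fatou component of `f`. -/
def IsFatouComponent (f : ℂ → ℂ) (U : Set ℂ) : Prop :=
  ∃ z ∈ FatouSet f, U = connectedComponentIn (FatouSet f) z

/-- `U` surrounds `0`: `0` lies in a bounded complementary component of `U`. -/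
def SurroundsZero (U : Set ℂ) : Prop :=
  0 ∉ U ∧ Bornology.IsBounded (connectedComponentIn Uᶜ 0)

/-- `U` is multiply connected: its complement has a bounded component. -/
def MultiplyConnected (U : Set ℂ) : Prop :=
  ∃ w ∉ U, Bornology.IsBounded (connectedComponentIn Uᶜ w)

/-- `U` is a Baker wandering domain of `f`. -/
def IsBakerWanderingDomain (f : ℂ → ℂ) (U : Set ℂ) : Prop :=
  ∃ z₀ ∈ FatouSet f, U = connectedComponentIn (FatouSet f) z₀ ∧
    (∀ m n : ℕ, m ≠ n →
      connectedComponentIn (FatouSet f) (f^[m] z₀) ≠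
        connectedComponentIn (FatouSet f) (f^[n] z₀)) ∧
    (∃ N : ℕ, ∀ n ≥ N,
      Bornology.IsBounded (connectedComponentIn (FatouSet f) (f^[n] z₀)) ∧
      MultiplyConnected (connectedComponentIn (FatouSet f) (f^[n] z₀)) ∧
      SurroundsZero (connectedComponentIn (FatouSet f) (f^[n] z₀))) ∧
    (∀ z ∈ U, Tendsto (fun n => f^[n] z) atTop (Bornology.cobounded ℂ))

/-- `U` is a completely invariant set for `f`. -/
def CompletelyInvariant (f : ℂ → ℂ) (U : Set ℂ) : Prop :=
  f '' U ⊆ U ∧ f ⁻¹' U ⊆ U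

/-!
If `f` is bounded on an unbounded curve, let `U` be the component of `{|f| < R}` containing the
curve, for a large `R`. As `f` is open, the boundary of `U` lies in that of `{|f| > R}`, so if `∞`
is a Baker omitted value then `∂U` has bounded components. The plane being unicoherent, each
component of the complement of `U` has connected, hence bounded, boundary; since `U` is
unbounded, these components are themselves bounded. By the maximum principle `|f| ≤ R` on them,
so `f` is bounded, against Liouville's theorem.

Conversely, an unbounded component of the boundary of `{|f| > R}` is a closed connected subset of
the open set `{|f| < R + 1}`, and following it to `∞` through components of
`{|f| < R + 1} \ {|z| ≤ n}` produces an unbounded curve on which `f` is bounded.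
-/

section Components

variable {X : Type*} [TopologicalSpace X]

lemma subset_or_disjoint_of_disjoint_frontier {T S : Set X} (hT : IsPreconnected T)
    (hTS : Disjoint T (frontier S)) : T ⊆ S ∨ Disjoint T S := by
  have hcover : T ⊆ interior S ∪ interior Sᶜ := by
    rw [← compl_frontier_eq_union_interior]
    exact hTS.subset_compl_right
  have hdisj : Disjoint (interior S) (interior Sᶜ) :=
    disjoint_compl_right.mono interior_subset interior_subset
  exact (hT.subset_or_subset isOpen_interior isOpen_interior hdisj hcover).imp
    (fun h => h.trans interior_subset)
    (fun h => Set.disjoint_left.2 fun _ hx => interior_subset (h hx))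

lemma closure_connectedComponentIn_inter_subset (F : Set X) (x : X) :
    closure (connectedComponentIn F x) ∩ F ⊆ connectedComponentIn F x := by
  rintro y ⟨hy, hyF⟩
  have hxF : x ∈ F := connectedComponentIn_nonempty_iff.1 (closure_nonempty_iff.1 ⟨y, hy⟩)
  have hins : IsPreconnected (insert y (connectedComponentIn F x)) :=
    isPreconnected_connectedComponentIn.subset_closure (subset_insert _ _)
      (insert_subset hy subset_closure)
  exact hins.subset_connectedComponentIn (Or.inr (mem_connectedComponentIn hxF))
    (insert_subset hyF (connectedComponentIn_subset F x)) (mem_insert _ _)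

lemma isClosed_connectedComponentIn {F : Set X} (hF : IsClosed F) (x : X) :
    IsClosed (connectedComponentIn F x) :=
  isClosed_of_closure_subset fun _ hy => closure_connectedComponentIn_inter_subset F x
    ⟨hy, closure_minimal (connectedComponentIn_subset F x) hF hy⟩

lemma frontier_connectedComponentIn_subset [LocallyConnectedSpace X] (F : Set X) (x : X) :
    frontier (connectedComponentIn F x) ⊆ frontier F := by
  rintro y ⟨hy, hy_int⟩
  refine ⟨closure_mono (connectedComponentIn_subset F x) hy, fun hyF => hy_int ?_⟩
  have hyC : y ∈ connectedComponentIn F x :=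
    closure_connectedComponentIn_inter_subset F x ⟨hy, interior_subset hyF⟩
  rw [connectedComponentIn_eq hyC]
  exact mem_interior_iff_mem_nhds.2
    (connectedComponentIn_mem_nhds (mem_interior_iff_mem_nhds.1 hyF))

lemma isPreconnected_union_connectedComponentIn_compl [PreconnectedSpace X]
    [LocallyConnectedSpace X] {U : Set X} (hU : IsConnected U) (x : X) :
    IsPreconnected (U ∪ connectedComponentIn Uᶜ x) := by
  set K := connectedComponentIn Uᶜ x
  have hKU : K ⊆ Uᶜ := connectedComponentIn_subset Uᶜ x
  rcases K.eq_empty_or_nonempty with hempty | hne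
  · simpa only [hempty, union_empty] using hU.isPreconnected
  have hK_univ : K ≠ univ := fun h => by
    obtain ⟨u, hu⟩ := hU.nonempty
    exact hKU (h ▸ mem_univ u) hu
  obtain ⟨p, hp⟩ := nonempty_frontier_iff.2 ⟨hne, hK_univ⟩
  have hpU : p ∈ closure U :=
    frontier_subset_closure (frontier_compl U ▸ frontier_connectedComponentIn_subset Uᶜ x hp)
  have hpK : p ∈ closure K := frontier_subset_closure hp
  have hp_mem : p ∈ U ∪ K := or_iff_not_imp_left.2 fun h =>
    closure_connectedComponentIn_inter_subset Uᶜ x ⟨hpK, h⟩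
  have hunion : insert p U ∪ insert p K = U ∪ K := by
    rw [insert_union, union_insert, insert_eq_of_mem (mem_insert _ _), insert_eq_of_mem hp_mem]
  rw [← hunion]
  exact IsPreconnected.union p (mem_insert _ _) (mem_insert _ _)
    (hU.isPreconnected.subset_closure (subset_insert _ _) (insert_subset hpU subset_closure))
    (isPreconnected_connectedComponentIn.subset_closure (subset_insert _ _)
      (insert_subset hpK subset_closure))

lemma isPreconnected_compl_connectedComponentIn_compl [PreconnectedSpace X]
    [LocallyConnectedSpace X] {U : Set X} (hU : IsConnected U) (x : X) :
    IsPreconnected (connectedComponentIn Uᶜ x)ᶜ := by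
  obtain ⟨u, hu⟩ := hU.nonempty
  refine isPreconnected_of_forall u fun y hy =>
    ⟨U ∪ connectedComponentIn Uᶜ y, ?_, Or.inl hu, ?_,
      isPreconnected_union_connectedComponentIn_compl hU y⟩
  · rintro z (hzU | hzy) hzx
    · exact connectedComponentIn_subset Uᶜ x hzx hzU
    · have hyU : y ∈ Uᶜ := connectedComponentIn_nonempty_iff.1 ⟨z, hzy⟩
      apply hy
      rw [connectedComponentIn_eq hzx, ← connectedComponentIn_eq hzy]
      exact mem_connectedComponentIn hyU
  · exact or_iff_not_imp_left.2 fun hyU => mem_connectedComponentIn hyU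

end Components

section Unicoherence

variable {X : Type*} [TopologicalSpace X]

lemma sub_eq_sub_of_circleExp_eq {S : Set X} (hS : IsPreconnected S) {φ ψ : X → ℝ}
    (hφ : Continuous φ) (hψ : Continuous ψ)
    (h : ∀ x ∈ S, Circle.exp (φ x) = Circle.exp (ψ x)) {x y : X} (hx : x ∈ S) (hy : y ∈ S) :
    φ x - ψ x = φ y - ψ y := by
  have hdiscrete : IsDiscrete (AddSubgroup.zmultiples (2 * Real.pi) : Set ℝ) := by
    rw [isDiscrete_iff_discreteTopology]
    exact inferInstanceAs (DiscreteTopology (AddSubgroup.zmultiples (2 * Real.pi)))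
  refine hS.constant_of_mapsTo hdiscrete (hφ.sub hψ).continuousOn (fun z hz => ?_) hx hy
  obtain ⟨n, hn⟩ := Circle.exp_eq_exp.1 (h z hz)
  exact ⟨n, by simp [hn]⟩

lemma exists_continuous_circleExp_eq [SimplyConnectedSpace X] [LocallyPathConnectedSpace X]
    {g : X → Circle} (hg : Continuous g) :
    ∃ θ : X → ℝ, Continuous θ ∧ ∀ x, Circle.exp (θ x) = g x := by
  obtain ⟨x₀⟩ := (inferInstance : Nonempty X)
  obtain ⟨t₀, ht₀⟩ := Circle.exp_surjective (g x₀)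
  obtain ⟨θ, ⟨-, hθ⟩, -⟩ :=
    Circle.isCoveringMap_exp.existsUnique_continuousMap_lifts ⟨g, hg⟩ x₀ t₀ ht₀
  exact ⟨θ, θ.continuous, congrFun hθ⟩

lemma exists_continuous_circleExp_eq_on_union [SimplyConnectedSpace X]
    [LocallyPathConnectedSpace X] {A B : Set X} (hA : IsClosed A) (hB : IsClosed B)
    (hAB : A ∪ B = univ) {g₁ g₂ : X → Circle} (hg₁ : Continuous g₁) (hg₂ : Continuous g₂)
    (hg : EqOn g₁ g₂ (A ∩ B)) :
    ∃ θ : X → ℝ, Continuous θ ∧ (∀ x ∈ A, Circle.exp (θ x) = g₁ x) ∧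
      ∀ x ∈ B, Circle.exp (θ x) = g₂ x := by
  classical
  have hfrontier : frontier A ⊆ A ∩ B := fun x hx =>
    ⟨hA.frontier_subset hx, closure_minimal (compl_subset_iff_union.2 hAB) hB
      (frontier_subset_closure (frontier_compl A ▸ hx))⟩
  obtain ⟨θ, hθ, hθg⟩ := exists_continuous_circleExp_eq
    (hg₁.piecewise (fun x hx => hg (hfrontier hx)) hg₂)
  refine ⟨θ, hθ, fun x hx => (hθg x).trans (piecewise_eq_of_mem A g₁ g₂ hx), fun x hx => ?_⟩
  by_cases hxA : x ∈ A
  · rw [hθg, piecewise_eq_of_mem A g₁ g₂ hxA, hg ⟨hxA, hx⟩]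
  · rw [hθg, piecewise_eq_of_notMem A g₁ g₂ hxA]

/-- If `A ∩ B` splits into two closed pieces, a Urysohn function `u` that is `0` on one and `1` on
the other yields a map to the circle, `exp (iπu)` on `A` and `exp (-iπu)` on `B`. A lift of it to
`ℝ` would change by `π` along `A` and by `-π` along `B` from the first piece to the second. -/
theorem isPreconnected_inter_of_union_eq_univ [SimplyConnectedSpace X]
    [LocallyPathConnectedSpace X] [NormalSpace X] {A B : Set X} (hA : IsPreconnected A)
    (hB : IsPreconnected B) (hAc : IsClosed A) (hBc : IsClosed B) (hAB : A ∪ B = univ) :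
    IsPreconnected (A ∩ B) := by
  rw [isPreconnected_closed_iff]
  intro S T hS hT hcover ⟨p, hp, hpS⟩ ⟨q, hq, hqT⟩
  by_contra hne
  have hdisj : Disjoint (A ∩ B ∩ S) (A ∩ B ∩ T) :=
    Set.disjoint_left.2 fun x hxS hxT => hne ⟨x, hxS.1, hxS.2, hxT.2⟩
  obtain ⟨u, hu0, hu1, -⟩ := exists_continuous_zero_one_of_isClosed
    ((hAc.inter hBc).inter hS) ((hAc.inter hBc).inter hT) hdisj
  have hagree : EqOn (fun x => Circle.exp (Real.pi * u x))
      (fun x => Circle.exp (-(Real.pi * u x))) (A ∩ B) := by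
    intro x hx
    rcases hcover hx with hxS | hxT
    · simp [hu0 ⟨hx, hxS⟩]
    · simp only [hu1 ⟨hx, hxT⟩, Pi.one_apply, mul_one, Circle.exp_eq_exp]
      exact ⟨1, by push_cast; ring⟩
  obtain ⟨θ, hθ, hθA, hθB⟩ := exists_continuous_circleExp_eq_on_union hAc hBc hAB
    (by fun_prop) (by fun_prop) hagree
  have hpqA := sub_eq_sub_of_circleExp_eq hA hθ (by fun_prop) hθA hp.1 hq.1
  have hpqB := sub_eq_sub_of_circleExp_eq hB hθ (by fun_prop) hθB hp.2 hq.2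
  have hup : u p = 0 := hu0 ⟨hp, hpS⟩
  have huq : u q = 1 := hu1 ⟨hq, hqT⟩
  rw [hup, huq] at hpqA hpqB
  linarith [Real.pi_pos]

lemma isPreconnected_frontier [SimplyConnectedSpace X] [LocallyPathConnectedSpace X]
    [NormalSpace X] {E : Set X} (hE : IsPreconnected E) (hEc : IsPreconnected Eᶜ) :
    IsPreconnected (frontier E) := by
  rw [frontier_eq_closure_inter_closure]
  refine isPreconnected_inter_of_union_eq_univ hE.closure hEc.closure isClosed_closure
    isClosed_closure (univ_subset_iff.1 ?_)
  rw [← union_compl_self E]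
  exact union_subset_union subset_closure subset_closure

end Unicoherence

section BoundedFrontier

variable {E : Type*} [NormedAddCommGroup E] [NormedSpace ℝ E]

lemma isPreconnected_setOf_lt_norm (h : 1 < Module.rank ℝ E) {r : ℝ} (hr : 0 ≤ r) :
    IsPreconnected {x : E | r < ‖x‖} := by
  have himage : (fun p : ℝ × E => p.1 • p.2) '' (Ioi r ×ˢ sphere 0 1) = {x : E | r < ‖x‖} := by
    ext x
    constructor
    · rintro ⟨⟨s, y⟩, ⟨hs, hy⟩, rfl⟩
      have hs : r < s := hs
      simpa [norm_smul, mem_sphere_zero_iff_norm.1 hy, abs_of_pos (hr.trans_lt hs)] using hs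
    · intro hx
      have hx0 : ‖x‖ ≠ 0 := (hr.trans_lt hx).ne'
      exact ⟨(‖x‖, ‖x‖⁻¹ • x), ⟨hx, by simp [norm_smul, hx0]⟩, smul_inv_smul₀ hx0 x⟩
  rw [← himage]
  exact (isPreconnected_Ioi.prod (isPreconnected_sphere h 0 1)).image _ continuous_smul.continuousOn

lemma isBounded_or_isBounded_compl_of_isBounded_frontier (h : 1 < Module.rank ℝ E) {S : Set E}
    (hS : IsBounded (frontier S)) : IsBounded S ∨ IsBounded Sᶜ := by
  obtain ⟨r, hr, hSr⟩ := hS.exists_pos_norm_le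
  have hdisj : Disjoint {x : E | r < ‖x‖} (frontier S) :=
    Set.disjoint_left.2 fun x hx hxS => not_le.2 hx (hSr x hxS)
  rcases subset_or_disjoint_of_disjoint_frontier
    (isPreconnected_setOf_lt_norm h hr.le) hdisj with hsub | hdisj
  · exact Or.inr (isBounded_iff_forall_norm_le.2
      ⟨r, fun x hx => not_lt.1 fun hlt => hx (hsub hlt)⟩)
  · exact Or.inl (isBounded_iff_forall_norm_le.2
      ⟨r, fun x hx => not_lt.1 fun hlt => Set.disjoint_left.1 hdisj hlt hx⟩)

theorem isBounded_connectedComponentIn_compl (h : 1 < Module.rank ℝ E) {U : Set E}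
    (hU : IsPreconnected U) (hUb : ¬ IsBounded U)
    (hfr : ∀ z ∈ frontier U, IsBounded (connectedComponentIn (frontier U) z)) (x : E) :
    IsBounded (connectedComponentIn Uᶜ x) := by
  set K := connectedComponentIn Uᶜ x
  have hUc : IsConnected U := ⟨nonempty_of_not_isBounded hUb, hU⟩
  have hK_fr : frontier K ⊆ frontier U :=
    frontier_compl U ▸ frontier_connectedComponentIn_subset Uᶜ x
  have hK_conn : IsPreconnected (frontier K) :=
    isPreconnected_frontier isPreconnected_connectedComponentIn
      (isPreconnected_compl_connectedComponentIn_compl hUc x)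
  have hK_bdd : IsBounded (frontier K) := by
    rcases (frontier K).eq_empty_or_nonempty with hempty | ⟨z, hz⟩
    · exact hempty ▸ isBounded_empty
    · exact (hfr z (hK_fr hz)).subset (hK_conn.subset_connectedComponentIn hz hK_fr)
  refine (isBounded_or_isBounded_compl_of_isBounded_frontier h hK_bdd).resolve_right fun hKc =>
    hUb (hKc.subset ?_)
  exact subset_compl_comm.1 (connectedComponentIn_subset Uᶜ x)

end BoundedFrontier

section UnboundedCurves

/-- A curve `[0, ∞) → X` tending to infinity, given by a function on `ℝ` whose values at negative
arguments are irrelevant. -/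
structure IsUnboundedCurve {X : Type*} [PseudoMetricSpace X] (γ : ℝ → X) : Prop where
  continuousOn : ContinuousOn γ (Ici 0)
  tendsto_cobounded : Tendsto γ atTop (cobounded X)

lemma IsUnboundedCurve.not_isBounded_image_Ici {X : Type*} [PseudoMetricSpace X] {γ : ℝ → X}
    (hγ : IsUnboundedCurve γ) : ¬ IsBounded (γ '' Ici 0) := by
  intro hb
  have hev : ∀ᶠ t in atTop, γ t ∉ γ '' Ici 0 :=
    hγ.tendsto_cobounded.eventually (isBounded_def.1 hb)
  obtain ⟨t, ht, ht0⟩ := (hev.and (eventually_ge_atTop 0)).exists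
  exact ht (mem_image_of_mem γ ht0)

lemma exists_finite_subset_biUnion_connectedComponentIn {X : Type*} [TopologicalSpace X]
    [LocallyConnectedSpace X] {C O W : Set X} (hC : IsPreconnected C) (hO : IsOpen O)
    (hW : IsOpen W) (hCO : C ∩ closure O ⊆ W) (hK : IsCompact (C ∩ frontier O)) :
    ∃ t : Set X, t.Finite ∧ C ∩ O ⊆ ⋃ x ∈ t, connectedComponentIn W x := by
  by_cases hmeet : ∀ a ∈ C ∩ O, (connectedComponentIn W a ∩ (C ∩ frontier O)).Nonempty
  · obtain ⟨t, ht⟩ := hK.elim_finite_subcover (connectedComponentIn W)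
      (fun _ => hW.connectedComponentIn) fun z hz => mem_iUnion.2
        ⟨z, mem_connectedComponentIn (hCO ⟨hz.1, frontier_subset_closure hz.2⟩)⟩
    refine ⟨t, t.finite_toSet, fun a ha => ?_⟩
    obtain ⟨y, hya, hy⟩ := hmeet a ha
    obtain ⟨x, hx, hyx⟩ := mem_iUnion₂.1 (ht hy)
    refine mem_iUnion₂.2 ⟨x, hx, ?_⟩
    rw [connectedComponentIn_eq hyx, ← connectedComponentIn_eq hya]
    exact mem_connectedComponentIn (hCO ⟨ha.1, subset_closure ha.2⟩)
  · push Not at hmeet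
    obtain ⟨a, ha, hdisj⟩ := hmeet
    set D := connectedComponentIn W a
    have haD : a ∈ D := mem_connectedComponentIn (hCO ⟨ha.1, subset_closure ha.2⟩)
    have hrel_closed : closure (D ∩ O) ∩ C ⊆ D ∩ O := by
      rintro z ⟨hz, hzC⟩
      have hzO : z ∈ closure O := closure_mono inter_subset_right hz
      have hzD : z ∈ D := closure_connectedComponentIn_inter_subset W a
        ⟨closure_mono inter_subset_left hz, hCO ⟨hzC, hzO⟩⟩
      refine ⟨hzD, by_contra fun hzO' => ?_⟩
      exact Set.eq_empty_iff_forall_notMem.1 hdisj z ⟨hzD, hzC, hO.frontier_eq ▸ ⟨hzO, hzO'⟩⟩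
    have hCD : C ⊆ D ∩ O := hC.subset_of_closure_inter_subset
      (hW.connectedComponentIn.inter hO) ⟨a, ha.1, haD, ha.2⟩ hrel_closed
    exact ⟨{a}, finite_singleton a, fun z hz => by simpa using (hCD hz.1).1⟩

lemma exists_continuousOn_forall_mem_of_joinedIn {X : Type*} [TopologicalSpace X] {x : ℕ → X}
    {D : ℕ → Set X} (h : ∀ n, JoinedIn (D n) (x n) (x (n + 1))) :
    ∃ γ : ℝ → X, ContinuousOn γ (Ici 0) ∧ ∀ t, 0 ≤ t → γ t ∈ D ⌊t⌋₊ := by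
  let p : ∀ n, Path (x n) (x (n + 1)) := fun n => (h n).somePath
  let γ : ℝ → X := fun t => (p ⌊t⌋₊).extend (t - ⌊t⌋₊)
  have hγ_eq : ∀ n : ℕ, EqOn γ (fun t => (p n).extend (t - n)) (Icc n (n + 1)) := by
    rintro n t ⟨hnt, htn⟩
    rcases htn.lt_or_eq with hlt | rfl
    · have hfloor : ⌊t⌋₊ = n := (Nat.floor_eq_iff (n.cast_nonneg.trans hnt)).2 ⟨hnt, hlt⟩
      subst hfloor
      rfl
    · have hfloor : ⌊(n : ℝ) + 1⌋₊ = n + 1 := by exact_mod_cast Nat.floor_natCast (R := ℝ) (n + 1)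
      simp [γ, hfloor]
  have hγ_cont : ∀ n : ℕ, ContinuousOn γ (Icc n (n + 1)) := fun n =>
    ((p n).continuous_extend.comp (continuous_sub_right (n : ℝ))).continuousOn.congr (hγ_eq n)
  have hfinite : LocallyFinite fun n : ℕ => Icc (n : ℝ) (n + 1) := by
    have hint : LocallyFinite fun n : ℤ => Icc (n : ℝ) (n + 1) :=
      locallyFinite_Icc_of_tendsto tendsto_intCast_atTop_atTop
        (tendsto_atBot_add_const_right _ 1 (tendsto_intCast_atBot_iff.2 tendsto_id))
    simpa [Function.comp_def] using hint.comp_injective Nat.cast_injective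
  refine ⟨γ, (hfinite.continuousOn_iUnion (fun _ => isClosed_Icc) hγ_cont).mono ?_, ?_⟩
  · exact fun t ht => mem_iUnion.2 ⟨⌊t⌋₊, Nat.floor_le ht, (Nat.lt_floor_add_one t).le⟩
  · intro t ht
    have hfract : t - ⌊t⌋₊ ∈ Icc (0 : ℝ) 1 :=
      ⟨by linarith [Nat.floor_le ht], by linarith [Nat.lt_floor_add_one t]⟩
    simp only [γ, Path.extend_apply _ hfract]
    exact (h ⌊t⌋₊).somePath_mem _

variable {X : Type*} [PseudoMetricSpace X] [ProperSpace X] [LocallyPathConnectedSpace X]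

lemma exists_finite_diff_closedBall_subset_biUnion_connectedComponentIn {C V : Set X}
    (hC : IsPreconnected C) (hCc : IsClosed C) (hV : IsOpen V) (hCV : C ⊆ V) (c : X) {r s : ℝ}
    (hrs : r < s) :
    ∃ t : Set X, t.Finite ∧
      C \ closedBall c s ⊆ ⋃ x ∈ t, connectedComponentIn (V \ closedBall c r) x := by
  have hclosure : closure (closedBall c s)ᶜ ⊆ (closedBall c r)ᶜ := by
    rw [closure_compl, compl_subset_compl]
    exact (closedBall_subset_ball hrs).trans ball_subset_interior_closedBall
  have hcompact : IsCompact (C ∩ frontier (closedBall c s)ᶜ) := by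
    rw [frontier_compl]
    exact ((isCompact_sphere c s).of_isClosed_subset isClosed_frontier
      frontier_closedBall_subset_sphere).inter_left hCc
  exact exists_finite_subset_biUnion_connectedComponentIn hC isClosed_closedBall.isOpen_compl
    (hV.sdiff isClosed_closedBall) (inter_subset_inter hCV hclosure) hcompact

/-- An ultrafilter on `C` converging to `∞` selects, for each `n`, one of the finitely many
components that cover `C` near infinity; any two selected components meet. -/
lemma exists_isConnected_subset_diff_closedBall {C V : Set X} (hC : IsPreconnected C)
    (hCc : IsClosed C) (hCb : ¬ IsBounded C) (hV : IsOpen V) (hCV : C ⊆ V) (c : X) :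
    ∃ D : ℕ → Set X, (∀ n, IsOpen (D n) ∧ IsConnected (D n) ∧ D n ⊆ V \ closedBall c n) ∧
      ∀ m n, (D m ∩ D n).Nonempty := by
  have hne : (𝓟 C ⊓ cobounded X).NeBot := by
    refine ⟨fun hbot => ?_⟩
    obtain ⟨S, hCS, hS⟩ := Filter.disjoint_cobounded_iff.1 (disjoint_iff.2 hbot)
    exact hCb (hS.subset hCS)
  let l : Ultrafilter X := Ultrafilter.of (𝓟 C ⊓ cobounded X)
  have hl : ↑l ≤ 𝓟 C ⊓ cobounded X := Ultrafilter.of_le _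
  have hcomponent : ∀ n : ℕ, ∃ x, connectedComponentIn (V \ closedBall c n) x ∈ l := by
    intro n
    obtain ⟨t, ht, hcover⟩ := exists_finite_diff_closedBall_subset_biUnion_connectedComponentIn
      hC hCc hV hCV c (lt_add_one (n : ℝ))
    have hfar : C \ closedBall c (n + 1) ∈ (l : Filter X) :=
      hl (inter_mem_inf (mem_principal_self C) (isBounded_def.1 isBounded_closedBall))
    obtain ⟨x, -, hx⟩ := (Ultrafilter.finite_biUnion_mem_iff ht).1 (mem_of_superset hfar hcover)
    exact ⟨x, hx⟩
  choose x hx using hcomponent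
  refine ⟨fun n => connectedComponentIn (V \ closedBall c n) (x n), fun n => ⟨?_, ?_, ?_⟩,
    fun m n => l.nonempty_of_mem (inter_mem (hx m) (hx n))⟩
  · exact (hV.sdiff isClosed_closedBall).connectedComponentIn
  · exact ⟨l.nonempty_of_mem (hx n), isPreconnected_connectedComponentIn⟩
  · exact connectedComponentIn_subset _ _

theorem exists_isUnboundedCurve_mapsTo {C V : Set X} (hC : IsPreconnected C) (hCc : IsClosed C)
    (hCb : ¬ IsBounded C) (hV : IsOpen V) (hCV : C ⊆ V) :
    ∃ γ : ℝ → X, IsUnboundedCurve γ ∧ MapsTo γ (Ici 0) V := by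
  obtain ⟨c, -⟩ := nonempty_of_not_isBounded hCb
  obtain ⟨D, hD, hDD⟩ := exists_isConnected_subset_diff_closedBall hC hCc hCb hV hCV c
  choose x hx using fun n => hDD n (n + 1)
  have hjoin : ∀ n, JoinedIn (D (n + 1)) (x n) (x (n + 1)) := fun n =>
    ((hD (n + 1)).1.isConnected_iff_isPathConnected.1 (hD (n + 1)).2.1).joinedIn _ (hx n).2 _
      (hx (n + 1)).1
  obtain ⟨γ, hγ, hγD⟩ := exists_continuousOn_forall_mem_of_joinedIn hjoin
  have hγ_mem : ∀ t, 0 ≤ t → γ t ∈ V \ closedBall c ((⌊t⌋₊ + 1 : ℕ) : ℝ) := fun t ht =>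
    (hD _).2.2 (hγD t ht)
  refine ⟨γ, ⟨hγ, (tendsto_dist_right_atTop_iff c).1 ?_⟩, fun t ht => (hγ_mem t ht).1⟩
  refine tendsto_atTop_mono' atTop ?_ tendsto_id
  filter_upwards [eventually_ge_atTop 0] with t ht
  have hlt : ((⌊t⌋₊ + 1 : ℕ) : ℝ) < dist (γ t) c := not_le.1 (hγ_mem t ht).2
  push_cast at hlt
  exact ((Nat.lt_floor_add_one t).trans hlt).le

end UnboundedCurves

section BakerOmittedValue

lemma BoundedComponents.mono {S T : Set ℂ} (hT : BoundedComponents T) (hST : S ⊆ T) :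
    BoundedComponents S :=
  fun z hz => (hT z (hST hz)).subset (connectedComponentIn_mono z hST)

lemma norm_le_of_boundedComponents_compl {F : Type*} [NormedAddCommGroup F] [NormedSpace ℂ F]
    {f : ℂ → F} (hf : Differentiable ℂ f) {U : Set ℂ} (hU : BoundedComponents Uᶜ) {R : ℝ}
    (hfU : ∀ z ∈ U, ‖f z‖ ≤ R) (z : ℂ) : ‖f z‖ ≤ R := by
  by_cases hzU : z ∈ U
  · exact hfU z hzU
  have hclosure : closure U ⊆ {w | ‖f w‖ ≤ R} :=
    closure_minimal hfU (isClosed_le hf.continuous.norm continuous_const)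
  have hfrontier : frontier (connectedComponentIn Uᶜ z) ⊆ closure U :=
    (frontier_connectedComponentIn_subset Uᶜ z).trans
      (frontier_compl U ▸ frontier_subset_closure)
  exact Complex.norm_le_of_forall_mem_frontier_norm_le (hU z hzU) hf.diffContOnCl
    (fun w hw => hclosure (hfrontier hw)) (subset_closure (mem_connectedComponentIn hzU))

lemma frontier_setOf_norm_lt_eq {X E : Type*} [TopologicalSpace X] [NormedAddCommGroup E]
    [NormedSpace ℝ E] {f : X → E} (hf : Continuous f) (hfo : IsOpenMap f) {R : ℝ} (hR : R ≠ 0) :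
    frontier {x | ‖f x‖ < R} = frontier {x | R < ‖f x‖} := by
  have hlt : {x | ‖f x‖ < R} = f ⁻¹' ball 0 R := by ext; simp
  have hgt : {x | R < ‖f x‖} = f ⁻¹' (closedBall 0 R)ᶜ := by ext; simp
  rw [hlt, hgt, ← hfo.preimage_frontier_eq_frontier_preimage hf,
    ← hfo.preimage_frontier_eq_frontier_preimage hf, frontier_compl, frontier_ball 0 hR,
    frontier_closedBall 0 hR]

theorem BakerOmittedValueInf.not_isBounded_image {f : ℂ → ℂ} (hB : BakerOmittedValueInf f)
    (hf : Differentiable ℂ f) (hnc : ¬ ∃ w, ∀ z, f z = w) {γ : ℝ → ℂ} (hγ : IsUnboundedCurve γ) :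
    ¬ IsBounded (f '' (γ '' Ici 0)) := by
  intro hb
  obtain ⟨R₀, hR₀, hB⟩ := hB
  obtain ⟨M, hM⟩ := hb.exists_norm_le
  obtain ⟨R, hR⟩ := exists_gt (max R₀ M)
  obtain ⟨hR₀R, hMR⟩ := max_lt_iff.1 hR
  let U := connectedComponentIn {z | ‖f z‖ < R} (γ 0)
  have hγU : γ '' Ici 0 ⊆ U :=
    (isPreconnected_Ici.image γ hγ.continuousOn).subset_connectedComponentIn
      (mem_image_of_mem γ self_mem_Ici) fun z hz => (hM _ (mem_image_of_mem f hz)).trans_lt hMR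
  have hU_unbounded : ¬ IsBounded U := fun hU =>
    hγ.not_isBounded_image_Ici (hU.subset hγU)
  have hf_open : IsOpenMap f :=
    (AnalyticOnNhd.is_constant_or_isOpenMap fun z _ => hf.analyticAt z).resolve_left hnc
  have hU_frontier : frontier U ⊆ frontier {z | R < ‖f z‖} :=
    frontier_setOf_norm_lt_eq hf.continuous hf_open (hR₀.trans hR₀R).ne' ▸
      frontier_connectedComponentIn_subset _ _
  have hU_compl : BoundedComponents Uᶜ := fun z _ =>
    isBounded_connectedComponentIn_compl (by simp [Complex.rank_real_complex])
      isPreconnected_connectedComponentIn hU_unbounded ((hB R hR₀R).mono hU_frontier) z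
  have hf_bdd : ∀ z, ‖f z‖ ≤ R := norm_le_of_boundedComponents_compl hf hU_compl fun z hz =>
    (connectedComponentIn_subset {z | ‖f z‖ < R} (γ 0) hz).le
  have hf_range : IsBounded (range f) :=
    isBounded_iff_forall_norm_le.2 ⟨R, forall_mem_range.2 hf_bdd⟩
  exact hnc ⟨f 0, fun z => hf.apply_eq_apply_of_bounded hf_range z 0⟩

theorem boundedComponents_frontier_of_forall_isUnboundedCurve {E : Type*}
    [SeminormedAddCommGroup E] {f : ℂ → E} (hf : Continuous f)
    (h : ∀ γ : ℝ → ℂ, IsUnboundedCurve γ → ¬ IsBounded (f '' (γ '' Ici 0))) (R : ℝ) :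
    BoundedComponents (frontier {z | R < ‖f z‖}) := by
  intro z _
  by_contra hunbounded
  have hfrontier : frontier {z | R < ‖f z‖} ⊆ {z | ‖f z‖ < R + 1} := fun w hw => by
    have hfw : R = ‖f w‖ := frontier_lt_subset_eq continuous_const hf.norm hw
    exact hfw ▸ lt_add_one R
  obtain ⟨γ, hγ, hγV⟩ := exists_isUnboundedCurve_mapsTo isPreconnected_connectedComponentIn
    (isClosed_connectedComponentIn isClosed_frontier z) hunbounded
    (isOpen_lt hf.norm continuous_const) ((connectedComponentIn_subset _ z).trans hfrontier)
  refine h γ hγ (isBounded_iff_forall_norm_le.2 ⟨R + 1, ?_⟩)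
  rw [forall_mem_image, forall_mem_image]
  exact fun t ht => (hγV ht).le

theorem stmt12_general (f : ℂ → ℂ) (hf : Differentiable ℂ f) (hnc : ¬ ∃ w, ∀ z, f z = w) :
    BakerOmittedValueInf f ↔
      (∀ γ : ℝ → ℂ, ContinuousOn γ (Set.Ici 0) → Tendsto γ atTop (Bornology.cobounded ℂ) →
        ¬ Bornology.IsBounded (f '' (γ '' Set.Ici 0))) :=
  ⟨fun hB _ hγ hγ_inf => hB.not_isBounded_image hf hnc ⟨hγ, hγ_inf⟩, fun h =>
    ⟨1, one_pos, fun R _ => boundedComponents_frontier_of_forall_isUnboundedCurve hf.continuous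
      (fun γ hγ => h γ hγ.continuousOn hγ.tendsto_cobounded) R⟩⟩

end BakerOmittedValue

/-- A transcendental entire function `f` has Baker omitted value
`∞` if and only if the image under `f` of every unbounded curve is unbounded. -/
theorem stmt12 (f : ℂ → ℂ) (hf : TranscEntire f) :
    BakerOmittedValueInf f ↔
      (∀ γ : ℝ → ℂ, ContinuousOn γ (Set.Ici 0) → Tendsto γ atTop (Bornology.cobounded ℂ) → ¬ Bornology.IsBounded (f '' (γ '' Set.Ici 0))) :=
  stmt12_general f hf.1 fun ⟨w, hw⟩ => hf.2 ⟨Polynomial.C w, by ext z; simp [hw]⟩
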